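/- Let ρ = [[A, B],[B†, C]] be a 2d×2d positive semidefinite matrix with A positive definite, whose partial transpose is also positive semidefinite (PPT). If B†A⁻¹B = BA⁻¹B†, then ρ is separable on ℂ²⊗ℂᵈ. -/

import Mathlib

open Matrix Kronecker Finset ComplexOrder

/-- 2x2 block matrix with n×n blocks, indexed by `Fin 2 × n`. -/
def blk {n : Type*} (A B C D : Matrix n n ℂ) :
    Matrix (Fin 2 × n) (Fin 2 × n) ℂ := fun p q =>
  if p.1 = 0 then (if q.1 = 0 then A p.2 q.2 else B p.2 q.2)
  else (if q.1 = 0 then C p.2 q.2 else D p.2 q.2)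

/-- Partial transpose on the first (qubit) factor. -/
def ptA {n : Type*} (ρ : Matrix (Fin 2 × n) (Fin 2 × n) ℂ) :
    Matrix (Fin 2 × n) (Fin 2 × n) ℂ := fun p q => ρ (q.1, p.2) (p.1, q.2)

/-- Separability of an (unnormalized) state on ℂ²⊗ℂⁿ. -/
def SepState {n : Type*} [Fintype n] (ρ : Matrix (Fin 2 × n) (Fin 2 × n) ℂ) : Prop :=
  ∃ (N : ℕ) (σ : Fin N → Matrix (Fin 2) (Fin 2) ℂ) (P : Fin N → Matrix n n ℂ),
    (∀ i, (σ i).PosSemidef) ∧ (∀ i, (P i).PosSemidef) ∧ ρ = ∑ i, σ i ⊗ₖ P i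

/-!
For a Hermitian square root `R` of `A`, the local congruence by `1 ⊗ R` carries
`[[1, X], [Xᴴ, Xᴴ X]]` with `X = R⁻¹ B R⁻¹` to `[[A, B], [Bᴴ, Bᴴ A⁻¹ B]]`, and the commutation
hypothesis says that `X` is normal. Expanding `X = ∑ z • P z` in spectral projections gives
`[[1, X], [Xᴴ, Xᴴ X]] = ∑ [[1, z], [conj z, |z|²]] ⊗ P z`, a separable state. Adding back the
Schur complement `C - Bᴴ A⁻¹ B ≥ 0`, tensored with `|1⟩⟨1|`, recovers `[[A, B], [Bᴴ, C]]`.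
-/

section BlockMatrices

variable {n : Type*}

lemma blk_add (A B C D A' B' C' D' : Matrix n n ℂ) :
    blk A B C D + blk A' B' C' D' = blk (A + A') (B + B') (C + C') (D + D') := by
  ext p q
  simp only [blk, Matrix.add_apply]
  split_ifs <;> rfl

lemma sum_blk {ι : Type*} (s : Finset ι) (A B C D : ι → Matrix n n ℂ) :
    ∑ i ∈ s, blk (A i) (B i) (C i) (D i) =
      blk (∑ i ∈ s, A i) (∑ i ∈ s, B i) (∑ i ∈ s, C i) (∑ i ∈ s, D i) := by
  ext p q
  simp only [blk, Matrix.sum_apply]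
  split_ifs <;> rfl

lemma kronecker_eq_blk (σ : Matrix (Fin 2) (Fin 2) ℂ) (P : Matrix n n ℂ) :
    σ ⊗ₖ P = blk (σ 0 0 • P) (σ 0 1 • P) (σ 1 0 • P) (σ 1 1 • P) := by
  ext ⟨a, i⟩ ⟨b, j⟩
  fin_cases a <;> fin_cases b <;> rfl

lemma blk_eq_sum_single_kronecker (A B C D : Matrix n n ℂ) :
    blk A B C D = single 0 0 1 ⊗ₖ A + single 0 1 1 ⊗ₖ B + single 1 0 1 ⊗ₖ C +
      single 1 1 1 ⊗ₖ D := by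
  simp [kronecker_eq_blk, blk_add]

lemma one_kronecker_mul_blk_mul_one_kronecker [Fintype n] (M N A B C D : Matrix n n ℂ) :
    ((1 : Matrix (Fin 2) (Fin 2) ℂ) ⊗ₖ M) * blk A B C D * (1 ⊗ₖ N) =
      blk (M * A * N) (M * B * N) (M * C * N) (M * D * N) := by
  simp only [blk_eq_sum_single_kronecker, Matrix.mul_add, Matrix.add_mul, ← mul_kronecker_mul,
    Matrix.one_mul, Matrix.mul_one]

lemma posSemidef_blk_iff {A B C D : Matrix n n ℂ} :
    (blk A B C D).PosSemidef ↔ (fromBlocks A B C D).PosSemidef := by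
  let e : n ⊕ n ≃ Fin 2 × n :=
    ((finTwoEquiv.prodCongr (Equiv.refl n)).trans (Equiv.boolProdEquivSum n)).symm
  have reindex : (blk A B C D).submatrix e e = fromBlocks A B C D := by
    ext (i | i) (j | j) <;> rfl
  rw [← reindex, posSemidef_submatrix_equiv]

lemma posSemidef_schurComplement_of_blk [Fintype n] [DecidableEq n] {A B C : Matrix n n ℂ}
    (hA : A.PosDef) (hρ : (blk A B Bᴴ C).PosSemidef) : (C - Bᴴ * A⁻¹ * B).PosSemidef := by
  have := hA.isUnit.invertible
  exact (hA.fromBlocks₁₁ B C).1 (posSemidef_blk_iff.1 hρ)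

end BlockMatrices

section Separability

variable {m n : Type*} [Fintype m] [Fintype n]

lemma sepState_sum_kronecker {ι : Type*} (s : Finset ι) {σ : ι → Matrix (Fin 2) (Fin 2) ℂ}
    {P : ι → Matrix n n ℂ} (hσ : ∀ i ∈ s, (σ i).PosSemidef) (hP : ∀ i ∈ s, (P i).PosSemidef) :
    SepState (∑ i ∈ s, σ i ⊗ₖ P i) :=
  ⟨#s, fun k ↦ σ (s.equivFin.symm k), fun k ↦ P (s.equivFin.symm k),
    fun k ↦ hσ _ (s.equivFin.symm k).2, fun k ↦ hP _ (s.equivFin.symm k).2, by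
    rw [s.equivFin.symm.sum_comp fun i : s ↦ σ i ⊗ₖ P i, s.sum_coe_sort fun i ↦ σ i ⊗ₖ P i]⟩

lemma sepState_kronecker {σ : Matrix (Fin 2) (Fin 2) ℂ} {P : Matrix n n ℂ}
    (hσ : σ.PosSemidef) (hP : P.PosSemidef) : SepState (σ ⊗ₖ P) :=
  ⟨1, fun _ ↦ σ, fun _ ↦ P, fun _ ↦ hσ, fun _ ↦ hP, by simp⟩

namespace SepState

lemma add {ρ τ : Matrix (Fin 2 × n) (Fin 2 × n) ℂ} (hρ : SepState ρ) (hτ : SepState τ) :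
    SepState (ρ + τ) := by
  obtain ⟨N, σ, P, hσ, hP, rfl⟩ := hρ
  obtain ⟨N', σ', P', hσ', hP', rfl⟩ := hτ
  have h := sepState_sum_kronecker Finset.univ (σ := Sum.elim σ σ') (P := Sum.elim P P')
    (by simpa using ⟨hσ, hσ'⟩) (by simpa using ⟨hP, hP'⟩)
  simpa only [Fintype.sum_sum_type, Sum.elim_inl, Sum.elim_inr] using h

lemma conjTranspose_mul_mul_kronecker {ρ : Matrix (Fin 2 × n) (Fin 2 × n) ℂ} (hρ : SepState ρ)
    (K : Matrix (Fin 2) (Fin 2) ℂ) (M : Matrix n m ℂ) :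
    SepState ((K ⊗ₖ M)ᴴ * ρ * (K ⊗ₖ M)) := by
  obtain ⟨N, σ, P, hσ, hP, rfl⟩ := hρ
  simp only [Matrix.mul_sum, Matrix.sum_mul, conjTranspose_kronecker, ← mul_kronecker_mul]
  exact sepState_sum_kronecker _ (fun i _ ↦ (hσ i).conjTranspose_mul_mul_same K)
    (fun i _ ↦ (hP i).conjTranspose_mul_mul_same M)

end SepState

end Separability

section SpectralProjections

variable {R A : Type*} {p : A → Prop} [CommSemiring R] [StarRing R] [MetricSpace R]
  [IsTopologicalSemiring R] [ContinuousStar R] [TopologicalSpace A] [Ring A] [StarRing A]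
  [Algebra R A] [ContinuousFunctionalCalculus R A p]

/-- The spectral projection of `a` at the point `z`, for `a` with finite spectrum: the functional
calculus of the indicator function of `{z}`. Both an `a` outside the domain `p` of the calculus and
an accumulation point `z` of the spectrum give the junk value `0`. -/
noncomputable def spectralProj (a : A) (z : R) : A :=
  cfc (Set.indicator {z} 1) a

lemma sum_smul_spectralProj {a : A} (hfin : (spectrum R a).Finite) (f : R → R) :
    ∑ z ∈ hfin.toFinset, f z • spectralProj a z = cfc f a := by
  classical
  have hc (g : R → R) : ContinuousOn g (spectrum R a) := hfin.continuousOn g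
  simp only [spectralProj, ← cfc_const_mul _ _ a (hc _)]
  rw [← cfc_sum _ a _ fun z _ ↦ hc _]
  refine cfc_congr fun x hx ↦ ?_
  simp [Set.indicator_apply, hfin.mem_toFinset.2 hx]

lemma spectralProj_nonneg [PartialOrder R] [ContinuousSqrt R] [StarOrderedRing R] [PartialOrder A]
    [StarOrderedRing A] (a : A) (z : R) : 0 ≤ spectralProj a z :=
  cfc_nonneg fun _ _ ↦ Set.indicator_nonneg (fun _ _ ↦ zero_le_one) _

end SpectralProjections

section NormalMatrices

open scoped Matrix.Norms.L2Operator MatrixOrder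

variable {n : Type*} [Fintype n] [DecidableEq n]

lemma blk_one_eq_sum_kronecker_spectralProj (X : Matrix n n ℂ) [IsStarNormal X] :
    blk 1 X Xᴴ (Xᴴ * X) = ∑ z ∈ X.finite_spectrum.toFinset,
      vecMulVec (star ![1, z]) ![1, z] ⊗ₖ spectralProj X z := by
  have hc (g : ℂ → ℂ) : ContinuousOn g (spectrum ℂ X) := X.finite_spectrum.continuousOn g
  have h_one : cfc (fun _ : ℂ ↦ 1) X = 1 := cfc_const_one ℂ X
  have h_id : cfc (fun z : ℂ ↦ z) X = X := cfc_id' ℂ X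
  have h_star : cfc (fun z : ℂ ↦ star z) X = Xᴴ := cfc_star_id (a := X)
  have h_normSq : cfc (fun z : ℂ ↦ star z * z) X = Xᴴ * X := by
    rw [cfc_mul _ _ X (hc _) (hc _), h_star, h_id]
  calc
    blk 1 X Xᴴ (Xᴴ * X)
    _ = blk (cfc (fun _ : ℂ ↦ 1) X) (cfc (fun z : ℂ ↦ z) X) (cfc (fun z : ℂ ↦ star z) X)
          (cfc (fun z : ℂ ↦ star z * z) X) := by rw [h_normSq, h_star, h_id, h_one]
    _ = ∑ z ∈ X.finite_spectrum.toFinset, vecMulVec (star ![1, z]) ![1, z] ⊗ₖ spectralProj X z := by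
      simp [← sum_smul_spectralProj X.finite_spectrum, kronecker_eq_blk, sum_blk]

lemma sepState_blk_one_of_isStarNormal (X : Matrix n n ℂ) [IsStarNormal X] :
    SepState (blk 1 X Xᴴ (Xᴴ * X)) := by
  rw [blk_one_eq_sum_kronecker_spectralProj]
  exact sepState_sum_kronecker _ (fun _ _ ↦ posSemidef_vecMulVec_star_self _)
    fun z _ ↦ (spectralProj_nonneg X z).posSemidef

lemma exists_isHermitian_isUnit_mul_self_eq {A : Matrix n n ℂ} (hA : A.PosDef) :
    ∃ R : Matrix n n ℂ, R.IsHermitian ∧ IsUnit R ∧ R * R = A :=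
  have hA₀ : 0 ≤ A := hA.posSemidef.nonneg
  ⟨CFC.sqrt A, (CFC.sqrt_nonneg A).posSemidef.isHermitian, (CFC.isUnit_sqrt_iff A).2 hA.isUnit,
    CFC.sqrt_mul_sqrt_self A⟩

end NormalMatrices

section Congruence

variable {n : Type*} [Fintype n] [DecidableEq n] {R : Matrix n n ℂ}

lemma conjTranspose_inv_mul_mul_inv (hR : R.IsHermitian) (B : Matrix n n ℂ) :
    (R⁻¹ * B * R⁻¹)ᴴ = R⁻¹ * Bᴴ * R⁻¹ := by
  rw [conjTranspose_mul, conjTranspose_mul, hR.inv.eq, Matrix.mul_assoc]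

lemma conjTranspose_mul_self_inv_mul_mul_inv (hR : R.IsHermitian) (B : Matrix n n ℂ) :
    (R⁻¹ * B * R⁻¹)ᴴ * (R⁻¹ * B * R⁻¹) = R⁻¹ * (Bᴴ * (R * R)⁻¹ * B) * R⁻¹ := by
  rw [conjTranspose_inv_mul_mul_inv hR]
  simp only [Matrix.mul_inv_rev, Matrix.mul_assoc]

lemma isStarNormal_inv_mul_mul_inv {B : Matrix n n ℂ} (hR : R.IsHermitian)
    (hcond : Bᴴ * (R * R)⁻¹ * B = B * (R * R)⁻¹ * Bᴴ) : IsStarNormal (R⁻¹ * B * R⁻¹) where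
  star_comm_self := by
    have h := conjTranspose_mul_self_inv_mul_mul_inv hR Bᴴ
    rw [← conjTranspose_inv_mul_mul_inv hR, conjTranspose_conjTranspose,
      conjTranspose_conjTranspose] at h
    rw [star_eq_conjTranspose, commute_iff_eq, conjTranspose_mul_self_inv_mul_mul_inv hR, hcond, h]

lemma mul_inv_mul_mul_inv_mul (hR : IsUnit R) (B : Matrix n n ℂ) :
    R * (R⁻¹ * B * R⁻¹) * R = B := by
  have hdet := R.isUnit_iff_isUnit_det.1 hR
  rw [Matrix.mul_assoc R⁻¹, mul_nonsing_inv_cancel_left _ _ hdet,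
    nonsing_inv_mul_cancel_right _ _ hdet]

end Congruence

section PositiveBlockMatrices

variable {n : Type*} [Fintype n] [DecidableEq n]

lemma sepState_blk_conjTranspose_mul_inv_mul {A B : Matrix n n ℂ} (hA : A.PosDef)
    (hcond : Bᴴ * A⁻¹ * B = B * A⁻¹ * Bᴴ) : SepState (blk A B Bᴴ (Bᴴ * A⁻¹ * B)) := by
  obtain ⟨R, hR, hR_unit, rfl⟩ := exists_isHermitian_isUnit_mul_self_eq hA
  have := isStarNormal_inv_mul_mul_inv hR hcond
  have hsep := (sepState_blk_one_of_isStarNormal (R⁻¹ * B * R⁻¹)).conjTranspose_mul_mul_kronecker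
    1 R
  rw [conjTranspose_mul_self_inv_mul_mul_inv hR, conjTranspose_inv_mul_mul_inv hR] at hsep
  simpa only [conjTranspose_kronecker, conjTranspose_one, hR.eq,
    one_kronecker_mul_blk_mul_one_kronecker, Matrix.mul_one,
    mul_inv_mul_mul_inv_mul hR_unit] using hsep

theorem stmt6_general (A B C : Matrix n n ℂ) (hA : A.PosDef) (hρ : (blk A B Bᴴ C).PosSemidef)
    (hcond : Bᴴ * A⁻¹ * B = B * A⁻¹ * Bᴴ) : SepState (blk A B Bᴴ C) := by
  have hschur : SepState (blk 0 0 0 (C - Bᴴ * A⁻¹ * B)) := by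
    have := sepState_kronecker (posSemidef_vecMulVec_star_self ![0, 1])
      (posSemidef_schurComplement_of_blk hA hρ)
    simpa [kronecker_eq_blk, vecMulVec_apply] using this
  simpa [blk_add] using (sepState_blk_conjTranspose_mul_inv_mul hA hcond).add hschur

end PositiveBlockMatrices

theorem stmt6 {d : ℕ} (A B C : Matrix (Fin d) (Fin d) ℂ) (hA : A.PosDef)
    (hρ : (blk A B Bᴴ C).PosSemidef)
    (hppt : (blk A Bᴴ B C).PosSemidef)
    (hcond : Bᴴ * A⁻¹ * B = B * A⁻¹ * Bᴴ) :
    SepState (blk A B Bᴴ C) :=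
  stmt6_general A B C hA hρ hcond
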